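/- Stabilization of Betti numbers: fix integers 0 ≤ q < d. Let X and Y be cubical sets in ℝ^d whose symmetric difference X △ Y is a bounded set. Then there exists a constant Δ_∞ ∈ ℤ such that, for every sequence of boxes A_n = x_n + Λ_{m_n} (x_n ∈ ℤ^d, m_n ∈ ℕ) with liminf A_n = ℝ^d (i.e. every bounded subset of ℝ^d is contained in A_n for all sufficiently large n), there exists n_∞ ∈ ℕ with β_q(X ∩ A_n) − β_q(Y ∩ A_n) = Δ_∞ for all n ≥ n_∞. -/

import Mathlib

open MeasureTheory Filter Topology

noncomputable section

/-- An elementary cube in `ℝ^d`: the `i`-th component is the elementary interval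
`[l, l+1]` if the Boolean is `true` (nondegenerate) and `[l, l]` if `false` (degenerate). -/
abbrev ElemCube (d : ℕ) := Fin d → ℤ × Bool

/-- The dimension of an elementary cube: the number of nondegenerate components. -/
def cubeDim {d : ℕ} (Q : ElemCube d) : ℕ :=
  (Finset.univ.filter fun i => (Q i).2 = true).card

/-- The geometric realization of an elementary cube as a subset of `ℝ^d`. -/
def cubeSet {d : ℕ} (Q : ElemCube d) : Set (Fin d → ℝ) :=
  {x | ∀ i, x i ∈ Set.Icc ((Q i).1 : ℝ) ((Q i).1 + (if (Q i).2 then 1 else 0))}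

/-- A cubical set is a union of elementary cubes. -/
def IsCubical {d : ℕ} (X : Set (Fin d → ℝ)) : Prop :=
  ∃ S : Set (ElemCube d), X = ⋃ Q ∈ S, cubeSet Q

/-- The free `ℤ`-module generated by all elementary cubes of `ℝ^d` (all dimensions mixed). -/
abbrev CubChain (d : ℕ) := ElemCube d →₀ ℤ

/-- The cubical boundary of a single elementary cube, defined by induction on the ambient
dimension, following the inductive definition: in `ℝ¹`, `∂ [l,l+1]^ = [l+1]^ - [l]^` and
`∂ Q̂ = 0` for degenerate `Q`; and for `Q = I × P`,
`∂ Q̂ = (∂ Î) ⋄ P̂ + (-1)^(dim I) Î ⋄ (∂ P̂)`, where `⋄` is the cubical product. -/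
def boundaryCube : (d : ℕ) → ElemCube d → CubChain d
  | 0, _ => 0
  | d + 1, Q =>
      (if (Q 0).2 then
          Finsupp.single (Fin.cons ((Q 0).1 + 1, false) (fun i => Q i.succ)) (1 : ℤ)
            - Finsupp.single (Fin.cons ((Q 0).1, false) (fun i => Q i.succ)) (1 : ℤ)
        else 0)
      + (if (Q 0).2 then (-1 : ℤ) else 1) •
          (boundaryCube d (fun i => Q i.succ)).sum
            (fun R n => Finsupp.single (Fin.cons (Q 0) R) n)

/-- The cubical boundary operator, the `ℤ`-linear extension of `boundaryCube`. -/
def boundaryHom (d : ℕ) : CubChain d →ₗ[ℤ] CubChain d :=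
  Finsupp.lsum ℤ fun Q => LinearMap.toSpanSingleton ℤ (CubChain d) (boundaryCube d Q)

/-- `C_k^d(X)`: the submodule of chains supported on the `k`-dimensional elementary cubes
contained in `X`. -/
def chainsOn (d k : ℕ) (X : Set (Fin d → ℝ)) : Submodule ℤ (CubChain d) :=
  Finsupp.supported ℤ ℤ {Q : ElemCube d | cubeDim Q = k ∧ cubeSet Q ⊆ X}

/-- `Z_q(X) = ker ∂_q^X`, the cycles of the cubical set `X` in degree `q`. -/
def cycleMod (d q : ℕ) (X : Set (Fin d → ℝ)) : Submodule ℤ (CubChain d) :=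
  chainsOn d q X ⊓ LinearMap.ker (boundaryHom d)

/-- `B_q(X) = im ∂_{q+1}^X`, the boundaries of the cubical set `X` in degree `q`. -/
def boundaryMod (d q : ℕ) (X : Set (Fin d → ℝ)) : Submodule ℤ (CubChain d) :=
  Submodule.map (boundaryHom d) (chainsOn d (q + 1) X)

/-- The `q`-th Betti number of a cubical set: the rank of the free part of the `q`-th
cubical homology `H_q(X) = Z_q(X) / B_q(X)`. -/
def betti (d q : ℕ) (X : Set (Fin d → ℝ)) : ℕ :=
  Module.finrank ℤ
    (↥(cycleMod d q X) ⧸ (boundaryMod d q X).comap (cycleMod d q X).subtype)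

/-- `Λ_n = [-n, n]^d ⊆ ℝ^d`. -/
def lambda (d n : ℕ) : Set (Fin d → ℝ) := {x | ∀ i, x i ∈ Set.Icc (-(n : ℝ)) n}

/-- The box `x + Λ_m = x + [-m, m]^d ⊆ ℝ^d`, for `x ∈ ℤ^d`. -/
def xbox {d : ℕ} (x : Fin d → ℤ) (m : ℕ) : Set (Fin d → ℝ) :=
  {y | ∀ i, y i ∈ Set.Icc ((x i : ℝ) - m) ((x i : ℝ) + m)}

/-!
For a bounded set `W`, rank–nullity gives `β_q(W) = rk C_q(W) - rk ∂C_q(W) - rk ∂C_{q+1}(W)`, so it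
suffices to stabilize `rk f(C_k(X ∩ B)) - rk f(C_k(Y ∩ B))` for a linear map `f` as the bounded set
`B` grows. Passing through `X ∩ Y`, we may assume `Y ⊆ X`. The `k`-cubes of `X` not contained in `Y`
meet the bounded set `X \ Y`, so there are finitely many of them and they all lie in `B` once `B` is
large. Hence `f(C_k(X ∩ B)) = f(C_k(Y ∩ B)) + N` with `N` finitely generated and independent of `B`,
and the difference of ranks is `rk N - rk (N ∩ f(C_k(Y ∩ B)))`. The submodules `N ∩ f(C_k(Y ∩ B))`
of the Noetherian module `N` increase with `B`, so they are eventually constant.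
-/

section EventuallyConst

theorem eventuallyConst_atTop_of_monotone {ι α : Type*} [Preorder ι] [Nonempty ι]
    [PartialOrder α] [WellFoundedGT α] {f : ι → α} (hf : Monotone f) :
    EventuallyConst f atTop := by
  obtain ⟨i, -, hi⟩ :=
    exists_maximalFor_of_wellFoundedGT (fun _ => True) f ⟨Classical.arbitrary ι, trivial⟩
  have : Nonempty α := ⟨f i⟩
  refine eventuallyConst_iff_exists_eventuallyEq.2 ⟨f i, ?_⟩
  filter_upwards [eventually_ge_atTop i] with j hij
  exact (hi trivial (hf hij)).antisymm (hf hij)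

theorem eventuallyConst_atTop_inf_of_monotone {ι R V : Type*} [Preorder ι] [Nonempty ι] [Ring R]
    [AddCommGroup V] [Module R V] {M : ι → Submodule R V} (hM : Monotone M) (N : Submodule R V)
    [IsNoetherian R N] : EventuallyConst (fun i => N ⊓ M i) atTop := by
  have hcomap : Monotone fun i => (M i).comap N.subtype := fun _ _ hij =>
    Submodule.comap_mono (hM hij)
  simpa only [Function.comp_def, Submodule.map_comap_subtype] using
    (eventuallyConst_atTop_of_monotone hcomap).comp (Submodule.map N.subtype)

end EventuallyConst

section Rank

universe u

open Module

variable {R W : Type*} {V : Type u} [Ring R] [StrongRankCondition R] [HasRankNullity.{u} R]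
  [AddCommGroup V] [Module R V] [AddCommGroup W] [Module R W]

theorem finrank_sup_add_finrank_inf_eq_of_isNoetherian (M N : Submodule R V)
    [IsNoetherian R M] [IsNoetherian R N] :
    finrank R ↥(M ⊔ N) + finrank R ↥(M ⊓ N) = finrank R M + finrank R N := by
  have : IsNoetherian R ↥(M ⊓ N) := isNoetherian_of_le inf_le_left
  have h := Submodule.rank_sup_add_rank_inf_eq M N
  simp only [← finrank_eq_rank] at h
  exact_mod_cast h

theorem eventuallyConst_finrank_sup_sub_finrank {ι : Type*} [Preorder ι] [Nonempty ι]
    {M : ι → Submodule R V} (hM : Monotone M) [∀ i, IsNoetherian R (M i)] (N : Submodule R V)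
    [IsNoetherian R N] :
    EventuallyConst (fun i => (finrank R ↥(M i ⊔ N) : ℤ) - finrank R (M i)) atTop := by
  have hinf := (eventuallyConst_atTop_inf_of_monotone hM N).comp
    fun P => (finrank R N : ℤ) - finrank R P
  refine hinf.congr <| .of_forall fun i => ?_
  have := finrank_sup_add_finrank_inf_eq_of_isNoetherian N (M i)
  rw [sup_comm] at this
  simp only [Function.comp_apply]
  omega

theorem finrank_map_add_finrank_inf_ker (f : V →ₗ[R] W) (C : Submodule R V)
    [IsNoetherian R C] :
    finrank R (C.map f) + finrank R ↥(C ⊓ f.ker) = finrank R C := by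
  rw [← (f.domRestrict C).ker.finrank_quotient_add_finrank,
    (f.domRestrict C).quotKerEquivRange.finrank_eq, LinearMap.range_domRestrict,
    LinearMap.ker_domRestrict, (Submodule.equivSubtypeMap _ _).finrank_eq,
    Submodule.map_comap_subtype]

theorem finrank_quotient_comap_subtype_add_finrank {B Z : Submodule R V} (h : B ≤ Z)
    [IsNoetherian R Z] : finrank R (Z ⧸ B.comap Z.subtype) + finrank R B = finrank R Z := by
  rw [← (Submodule.comapSubtypeEquivOfLe h).finrank_eq, Submodule.finrank_quotient_add_finrank]

end Rank

section Boundary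

variable {d : ℕ}

theorem cubeDim_cons (a : ℤ × Bool) (R : ElemCube d) :
    cubeDim (Fin.cons a R : ElemCube (d + 1)) = (if a.2 then 1 else 0) + cubeDim R := by
  simp only [cubeDim, Finset.card_filter, Fin.sum_univ_succ, Fin.cons_zero, Fin.cons_succ]

theorem mem_cubeSet_cons {a : ℤ × Bool} {R : ElemCube d} {x : Fin (d + 1) → ℝ} :
    x ∈ cubeSet (Fin.cons a R : ElemCube (d + 1)) ↔
      x 0 ∈ Set.Icc (a.1 : ℝ) (a.1 + (if a.2 then 1 else 0)) ∧ Fin.tail x ∈ cubeSet R :=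
  Fin.forall_fin_succ

/-- The facets of an elementary cube: the elementary cubes of codimension one contained in it. -/
def facets (Q : ElemCube d) : Set (ElemCube d) :=
  {R | cubeDim R + 1 = cubeDim Q ∧ cubeSet R ⊆ cubeSet Q}

theorem cons_mem_facets_cons {R P : ElemCube d} (h : R ∈ facets P) (a : ℤ × Bool) :
    (Fin.cons a R : ElemCube (d + 1)) ∈ facets (Fin.cons a P : ElemCube (d + 1)) := by
  refine ⟨?_, fun x hx => ?_⟩
  · rw [cubeDim_cons, cubeDim_cons, add_assoc, h.1]
  · rw [mem_cubeSet_cons] at hx ⊢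
    exact ⟨hx.1, h.2 hx.2⟩

theorem cons_endpoint_mem_facets_cons {l e : ℤ} (he : e = l ∨ e = l + 1) (R : ElemCube d) :
    (Fin.cons (e, false) R : ElemCube (d + 1)) ∈
      facets (Fin.cons (l, true) R : ElemCube (d + 1)) := by
  refine ⟨by simp [cubeDim_cons, add_comm], fun x hx => ?_⟩
  rw [mem_cubeSet_cons] at hx ⊢
  refine ⟨Set.Icc_subset_Icc ?_ ?_ hx.1, hx.2⟩ <;> rcases he with rfl | rfl <;> simp

/-- The cubical product `c ↦ Î ⋄ c` with a fixed elementary interval `I`, encoded by `a`, as a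
linear map on chains. -/
def consChain (a : ℤ × Bool) : CubChain d →ₗ[ℤ] CubChain (d + 1) :=
  Finsupp.lmapDomain ℤ ℤ fun R => (Fin.cons a R : ElemCube (d + 1))

theorem consChain_single (a : ℤ × Bool) (R : ElemCube d) (n : ℤ) :
    consChain a (Finsupp.single R n) = Finsupp.single (Fin.cons a R : ElemCube (d + 1)) n :=
  Finsupp.mapDomain_single

theorem boundaryHom_single (Q : ElemCube d) (n : ℤ) :
    boundaryHom d (Finsupp.single Q n) = n • boundaryCube d Q := by
  simp [boundaryHom]

theorem boundaryCube_cons (a : ℤ × Bool) (R : ElemCube d) :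
    boundaryCube (d + 1) (Fin.cons a R) =
      (if a.2 then Finsupp.single (Fin.cons (a.1 + 1, false) R : ElemCube (d + 1)) 1
        - Finsupp.single (Fin.cons (a.1, false) R : ElemCube (d + 1)) 1 else 0)
      + (if a.2 then (-1 : ℤ) else 1) • consChain a (boundaryCube d R) :=
  rfl

theorem boundaryHom_consChain (a : ℤ × Bool) (c : CubChain d) :
    boundaryHom (d + 1) (consChain a c) =
      (if a.2 then consChain (a.1 + 1, false) c - consChain (a.1, false) c else 0)
      + (if a.2 then (-1 : ℤ) else 1) • consChain a (boundaryHom d c) := by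
  induction c using Finsupp.induction_linear with
  | zero => simp
  | add c c' hc hc' =>
    simp only [map_add, hc, hc']
    split_ifs <;> module
  | single R n =>
    have smul_single_one (Q : ElemCube (d + 1)) : Finsupp.single Q n = n • Finsupp.single Q 1 := by
      simp
    simp only [consChain_single, boundaryHom_single, boundaryCube_cons, map_smul,
      smul_single_one (Fin.cons _ R)]
    split_ifs <;> module

theorem boundaryHom_boundaryHom (c : CubChain d) : boundaryHom d (boundaryHom d c) = 0 := by
  induction c using Finsupp.induction_linear with
  | zero => simp
  | add c c' hc hc' => simp [hc, hc']
  | single Q n =>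
    induction Q using Fin.consInduction with
    | elim0 => simp [boundaryHom_single, boundaryCube]
    | cons a R ih =>
      rw [← consChain_single]
      rcases a with ⟨l, _ | _⟩ <;> simp [boundaryHom_consChain, ih]

theorem boundaryCube_mem_supported_facets (Q : ElemCube d) :
    boundaryCube d Q ∈ Finsupp.supported ℤ ℤ (facets Q) := by
  induction Q using Fin.consInduction with
  | elim0 => exact Submodule.zero_mem _
  | cons a R ih =>
    rw [boundaryCube_cons]
    have hcons : consChain a (boundaryCube _ R) ∈
        Finsupp.supported ℤ ℤ (facets (Fin.cons a R : ElemCube _)) :=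
      Finsupp.supported_comap_lmapDomain ℤ ℤ _ _ <|
        Finsupp.supported_mono (fun _ hP => cons_mem_facets_cons hP a) ih
    refine Submodule.add_mem _ ?_ (Submodule.smul_mem _ _ hcons)
    rcases a with ⟨l, _ | _⟩
    · exact Submodule.zero_mem _
    · exact Submodule.sub_mem _
        (Finsupp.single_mem_supported ℤ _ (cons_endpoint_mem_facets_cons (.inr rfl) R))
        (Finsupp.single_mem_supported ℤ _ (cons_endpoint_mem_facets_cons (.inl rfl) R))

theorem map_boundaryHom_chainsOn_succ_le (k : ℕ) (X : Set (Fin d → ℝ)) :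
    (chainsOn d (k + 1) X).map (boundaryHom d) ≤ chainsOn d k X := by
  rw [chainsOn, Finsupp.supported_eq_span_single, Submodule.map_span_le]
  rintro _ ⟨Q, ⟨hdim, hQX⟩, rfl⟩
  rw [boundaryHom_single, one_smul]
  refine Finsupp.supported_mono (fun R hR => ?_) (boundaryCube_mem_supported_facets Q)
  exact ⟨Nat.succ_injective (hR.1.trans hdim), hR.2.trans hQX⟩

theorem boundaryMod_le_cycleMod (q : ℕ) (X : Set (Fin d → ℝ)) :
    boundaryMod d q X ≤ cycleMod d q X := by
  refine le_inf (map_boundaryHom_chainsOn_succ_le q X) ?_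
  rintro _ ⟨c, -, rfl⟩
  exact boundaryHom_boundaryHom c

end Boundary

section Finiteness

variable {d : ℕ} {X : Set (Fin d → ℝ)}

theorem isBounded_xbox (x : Fin d → ℤ) (m : ℕ) : Bornology.IsBounded (xbox x m) :=
  (Metric.isBounded_Icc (fun i => (x i : ℝ) - m) (fun i => (x i : ℝ) + m)).subset
    fun _ hy => ⟨fun i => (hy i).1, fun i => (hy i).2⟩

theorem finite_setOf_intCast_mem {s : Set ℝ} (hs : Bornology.IsBounded s) :
    {l : ℤ | (l : ℝ) ∈ s}.Finite := by
  have hcompl : sᶜ ∈ cocompact ℝ :=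
    Metric.cobounded_eq_cocompact (α := ℝ) ▸ Bornology.isBounded_def.1 hs
  have hcofinite := Int.tendsto_coe_cofinite hcompl
  rwa [mem_map, mem_cofinite, ← Set.preimage_compl, compl_compl] at hcofinite

theorem corner_mem_cubeSet (Q : ElemCube d) : (fun i => ((Q i).1 : ℝ)) ∈ cubeSet Q := by
  refine fun i => ⟨le_rfl, ?_⟩
  split_ifs <;> simp

theorem finite_setOf_cubeSet_subset (hX : Bornology.IsBounded X) :
    {Q : ElemCube d | cubeSet Q ⊆ X}.Finite := by
  refine (Set.Finite.pi' fun i =>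
    (finite_setOf_intCast_mem (hX.image_eval i)).prod Set.finite_univ).subset ?_
  exact fun Q hQ i => ⟨⟨_, hQ (corner_mem_cubeSet Q), rfl⟩, trivial⟩

theorem isNoetherian_supported {R α : Type*} [Ring R] [IsNoetherianRing R] {s : Set α}
    (hs : s.Finite) : IsNoetherian R (Finsupp.supported R R s) := by
  have := hs.to_subtype
  exact isNoetherian_of_linearEquiv (Finsupp.supportedEquivFinsupp s).symm

theorem isNoetherian_chainsOn (k : ℕ) (hX : Bornology.IsBounded X) :
    IsNoetherian ℤ (chainsOn d k X) :=
  isNoetherian_supported ((finite_setOf_cubeSet_subset hX).subset fun _ hQ => hQ.2)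

theorem betti_eq_finrank_sub (q : ℕ) (hX : Bornology.IsBounded X) :
    (betti d q X : ℤ) = Module.finrank ℤ (chainsOn d q X)
      - Module.finrank ℤ ((chainsOn d q X).map (boundaryHom d))
      - Module.finrank ℤ ((chainsOn d (q + 1) X).map (boundaryHom d)) := by
  have := isNoetherian_chainsOn q hX
  have : IsNoetherian ℤ (cycleMod d q X) := isNoetherian_of_le inf_le_left
  have hcycle : Module.finrank ℤ ((chainsOn d q X).map (boundaryHom d))
      + Module.finrank ℤ (cycleMod d q X) = Module.finrank ℤ (chainsOn d q X) :=
    finrank_map_add_finrank_inf_ker (boundaryHom d) (chainsOn d q X)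
  have hhomology : betti d q X + Module.finrank ℤ ((chainsOn d (q + 1) X).map (boundaryHom d))
      = Module.finrank ℤ (cycleMod d q X) :=
    finrank_quotient_comap_subtype_add_finrank (boundaryMod_le_cycleMod q X)
  omega

end Finiteness

section Stabilization

/-- The bounded subsets of `E` ordered by inclusion. A property holds eventually along `atTop` when
it holds for all bounded sets containing some fixed bounded set. -/
abbrev BoundedSet (E : Type*) [Bornology E] := {B : Set E // Bornology.IsBounded B}

instance (E : Type*) [Bornology E] : Nonempty (BoundedSet E) :=
  ⟨⟨∅, Bornology.isBounded_empty⟩⟩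

theorem tendsto_boundedSet_atTop {E ι : Type*} [Bornology E] {l : Filter ι} {A : ι → Set E}
    (hA : ∀ i, Bornology.IsBounded (A i))
    (h : ∀ S : Set E, Bornology.IsBounded S → ∀ᶠ i in l, S ⊆ A i) :
    Tendsto (fun i => (⟨A i, hA i⟩ : BoundedSet E)) l atTop :=
  tendsto_atTop.2 fun S => h S S.2

variable {d : ℕ} {X Y : Set (Fin d → ℝ)}

theorem chainsOn_mono {k : ℕ} (h : X ⊆ Y) : chainsOn d k X ≤ chainsOn d k Y :=
  Finsupp.supported_mono fun _ hQ => ⟨hQ.1, hQ.2.trans h⟩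

theorem dist_le_one_of_mem_cubeSet {Q : ElemCube d} {x y : Fin d → ℝ} (hx : x ∈ cubeSet Q)
    (hy : y ∈ cubeSet Q) : dist x y ≤ 1 := by
  refine (dist_pi_le_iff zero_le_one).2 fun i => (Real.dist_le_of_mem_Icc (hx i) (hy i)).trans ?_
  split_ifs <;> simp

/-- The elementary `k`-cubes contained in `X` but not in `Y`: the generators gained in passing from
`C_k(Y)` to `C_k(X)` when `Y ⊆ X`. -/
def cubesGained (k : ℕ) (X Y : Set (Fin d → ℝ)) : Set (ElemCube d) :=
  {Q | cubeDim Q = k ∧ cubeSet Q ⊆ X ∧ ¬ cubeSet Q ⊆ Y}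

theorem cubeSet_subset_cthickening_of_mem_cubesGained {k : ℕ} {Q : ElemCube d}
    (hQ : Q ∈ cubesGained k X Y) : cubeSet Q ⊆ Metric.cthickening 1 (X \ Y) := by
  intro x hx
  obtain ⟨y, hyQ, hyY⟩ := Set.not_subset.1 hQ.2.2
  exact Metric.mem_cthickening_of_dist_le x y 1 _ ⟨hQ.2.1 hyQ, hyY⟩
    (dist_le_one_of_mem_cubeSet hx hyQ)

theorem finite_cubesGained (k : ℕ) (h : Bornology.IsBounded (X \ Y)) :
    (cubesGained k X Y).Finite :=
  (finite_setOf_cubeSet_subset h.cthickening).subset fun _ hQ =>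
    cubeSet_subset_cthickening_of_mem_cubesGained hQ

theorem chainsOn_inter_eq_sup (k : ℕ) {B : Set (Fin d → ℝ)} (hYX : Y ⊆ X)
    (hB : Metric.cthickening 1 (X \ Y) ⊆ B) :
    chainsOn d k (X ∩ B) = chainsOn d k (Y ∩ B) ⊔ Finsupp.supported ℤ ℤ (cubesGained k X Y) := by
  rw [chainsOn, chainsOn, ← Finsupp.supported_union]
  congr 1
  ext Q
  have hgained : Q ∈ cubesGained k X Y → cubeSet Q ⊆ B := fun hQ =>
    (cubeSet_subset_cthickening_of_mem_cubesGained hQ).trans hB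
  have hmono : cubeSet Q ⊆ Y → cubeSet Q ⊆ X := fun hQ => hQ.trans hYX
  simp only [cubesGained, Set.mem_union, Set.mem_ofPred_eq, Set.subset_inter_iff] at hgained ⊢
  tauto

theorem eventuallyConst_finrank_map_chainsOn_sub {W : Type*} [AddCommGroup W] (k : ℕ)
    (f : CubChain d →ₗ[ℤ] W) (hYX : Y ⊆ X) (h : Bornology.IsBounded (X \ Y)) :
    EventuallyConst (fun B : BoundedSet (Fin d → ℝ) =>
      (Module.finrank ℤ ((chainsOn d k (X ∩ B)).map f) : ℤ)
        - Module.finrank ℤ ((chainsOn d k (Y ∩ B)).map f)) atTop := by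
  have hmono : Monotone fun B : BoundedSet (Fin d → ℝ) => (chainsOn d k (Y ∩ B)).map f :=
    fun _ _ hB => Submodule.map_mono (chainsOn_mono (Set.inter_subset_inter_right Y hB))
  have (B : BoundedSet (Fin d → ℝ)) : IsNoetherian ℤ (chainsOn d k (Y ∩ B)) :=
    isNoetherian_chainsOn k (B.2.subset Set.inter_subset_right)
  have := isNoetherian_supported (R := ℤ) (finite_cubesGained k h)
  refine (eventuallyConst_finrank_sup_sub_finrank hmono
    ((Finsupp.supported ℤ ℤ (cubesGained k X Y)).map f)).congr ?_
  filter_upwards [eventually_ge_atTop ⟨_, h.cthickening⟩] with B hB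
  rw [chainsOn_inter_eq_sup k hYX hB, Submodule.map_sup]

theorem eventuallyConst_betti_sub_of_subset (q : ℕ) (hYX : Y ⊆ X)
    (h : Bornology.IsBounded (X \ Y)) :
    EventuallyConst (fun B : BoundedSet (Fin d → ℝ) =>
      (betti d q (X ∩ B) : ℤ) - betti d q (Y ∩ B)) atTop := by
  have hchains := eventuallyConst_finrank_map_chainsOn_sub q LinearMap.id hYX h
  have hboundary (k : ℕ) := eventuallyConst_finrank_map_chainsOn_sub k (boundaryHom d) hYX h
  refine ((hchains.comp₂ (· - ·) (hboundary q)).comp₂ (· - ·) (hboundary (q + 1))).congr <|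
    .of_forall fun B => ?_
  have hbounded (U : Set (Fin d → ℝ)) : Bornology.IsBounded (U ∩ B) :=
    B.2.subset Set.inter_subset_right
  simp only [betti_eq_finrank_sub q (hbounded _)]
  rw [Submodule.map_id, Submodule.map_id]
  ring

theorem betti_stabilization_general (q : ℕ) (hbdd : Bornology.IsBounded (symmDiff X Y)) :
    EventuallyConst (fun B : BoundedSet (Fin d → ℝ) =>
      (betti d q (X ∩ B) : ℤ) - betti d q (Y ∩ B)) atTop := by
  have hX : Bornology.IsBounded (X \ (X ∩ Y)) := hbdd.subset (by simp [Set.symmDiff_def])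
  have hY : Bornology.IsBounded (Y \ (X ∩ Y)) := hbdd.subset (by simp [Set.symmDiff_def])
  refine ((eventuallyConst_betti_sub_of_subset q Set.inter_subset_left hX).comp₂ (· - ·)
    (eventuallyConst_betti_sub_of_subset q Set.inter_subset_right hY)).congr <|
    .of_forall fun B => ?_
  ring

end Stabilization

/-- **stabilization of Betti numbers.** Fix `0 ≤ q < d`. Let `X` and `Y` be
cubical sets in `ℝ^d` whose symmetric difference `X △ Y` is bounded. Then there is a constant
`Δ_∞ ∈ ℤ` such that, for every sequence of boxes `A_n = x_n + Λ_{m_n}` with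
`liminf A_n = ℝ^d` (every bounded subset of `ℝ^d` is contained in `A_n` for all sufficiently
large `n`), one has `β_q(X ∩ A_n) - β_q(Y ∩ A_n) = Δ_∞` for all large enough `n`. -/
theorem betti_stabilization (d q : ℕ) (hq : q < d)
    (X Y : Set (Fin d → ℝ)) (hX : IsCubical X) (hY : IsCubical Y)
    (hbdd : Bornology.IsBounded (symmDiff X Y)) :
    ∃ Δ : ℤ, ∀ (x : ℕ → Fin d → ℤ) (m : ℕ → ℕ),
      (∀ S : Set (Fin d → ℝ), Bornology.IsBounded S →
        ∀ᶠ n in atTop, S ⊆ xbox (x n) (m n)) →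
      ∃ N : ℕ, ∀ n ≥ N,
        (betti d q (X ∩ xbox (x n) (m n)) : ℤ) - (betti d q (Y ∩ xbox (x n) (m n)) : ℤ)
          = Δ := by
  obtain ⟨Δ, hΔ⟩ := eventuallyConst_iff_exists_eventuallyEq.1 (betti_stabilization_general q hbdd)
  exact ⟨Δ, fun x m hxm => eventually_atTop.1 <|
    (tendsto_boundedSet_atTop (fun n => isBounded_xbox (x n) (m n)) hxm).eventually hΔ⟩

end
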